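/- arXiv:1810.10567 — 3 statements merged into one kernel-verified Lean document; each statement's English description precedes it below -/
import Mathlib

section
/- If k is an infinite field, then k((t)) with the t-adic topology is not a locally compact topological space. -/
open LaurentSeries

/-!
A compact neighbourhood of `0` in `k((t))` contains `{x : ord x ≥ n}` for some `n`, hence all
monomials `a tⁿ` with `a ∈ k`. The coefficient map `x ↦ xₙ` is continuous for the discrete
topology on `k`, so it sends the neighbourhood to a compact, i.e. finite, subset of `k`; but this
image is all of `k`, which is infinite.
-/

/-- Every neighbourhood of `0` contains all the monomials of some fixed degree. -/
lemma exists_single_mem_of_mem_nhds_zero {k : Type*} [Field k] {s : Set (LaurentSeries k)}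
    (hs : s ∈ nhds (0 : LaurentSeries k)) :
    ∃ n : ℤ, ∀ a : k, (HahnSeries.single n a : LaurentSeries k) ∈ s := by
  obtain ⟨γ, hγ⟩ := (Valued.mem_nhds_zero).1 hs
  set D := MonoidWithZeroHom.ValueGroup₀.embedding γ.1 with hD
  have hD0 : D ≠ 0 := (map_ne_zero _).2 γ.ne_zero
  -- The extra `+ 1` turns the bound on the valuation into a strict one.
  refine ⟨-WithZero.log D + 1, fun a => hγ ?_⟩
  rw [Set.mem_ofPred_eq, Valuation.restrict_lt_iff_lt_embedding]
  refine lt_of_le_of_lt ((LaurentSeries.valuation_le_iff_coeff_lt_eq_zero k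
    (D := -WithZero.log D + 1)).2 fun m hm => HahnSeries.coeff_single_of_ne hm.ne) ?_
  rw [← hD, ← WithZero.lt_log_iff_exp_lt hD0]
  lia

theorem not_locallyCompact_laurentSeries (k : Type*) [Field k] [Infinite k] :
    ¬ LocallyCompactSpace (LaurentSeries k) := by
  intro h
  obtain ⟨s, hs, hs0⟩ := exists_compact_mem_nhds (0 : LaurentSeries k)
  obtain ⟨n, hn⟩ := exists_single_mem_of_mem_nhds_zero hs0
  let _ : UniformSpace k := ⊥
  have : DiscreteTopology k := ⟨rfl⟩
  have hcont : Continuous fun x : LaurentSeries k => x.coeff n :=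
    (LaurentSeries.uniformContinuous_coeff n).continuous
  have hfin := (hs.image hcont).finite_of_discrete
  refine Set.infinite_univ (hfin.subset fun a _ => ⟨_, hn a, ?_⟩)
  simp
end

section
/- If k is an infinite field, then the t-adic unit sphere {x ∈ k((t)) : x ≠ 0 and ord x = 0} is not a compact subset of k((t)) for the t-adic topology. -/
open LaurentSeries

/-!
For the discrete topology on `k`, the constant-coefficient map `k((t)) → k` is continuous
(`LaurentSeries.uniformContinuous_coeff`). It maps the unit sphere onto a set containing every
`a ≠ 0`, as the image of the constant series `a`. A compact subset of a discrete space is finite,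
so compactness of the sphere would make `k` finite.
-/

theorem not_isCompact_unitSphere_laurentSeries (k : Type*) [Field k] [Infinite k] :
    ¬ IsCompact {x : LaurentSeries k | x ≠ 0 ∧ x.order = 0} := by
  intro h
  let _ : UniformSpace k := ⊥
  have : DiscreteTopology k := ⟨rfl⟩
  have hcont : Continuous fun f : LaurentSeries k => f.coeff 0 :=
    (LaurentSeries.uniformContinuous_coeff 0).continuous
  have hfin := (h.image hcont).finite_of_discrete
  have hsub : ({0}ᶜ : Set k) ⊆
      (fun f : LaurentSeries k => f.coeff 0) '' {x | x ≠ 0 ∧ x.order = 0} := by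
    intro a ha
    have ha0 : a ≠ 0 := by simpa using ha
    exact ⟨HahnSeries.single 0 a,
      ⟨HahnSeries.single_ne_zero ha0, HahnSeries.order_single ha0⟩, HahnSeries.coeff_single_same 0 a⟩
  exact (Set.finite_singleton (0 : k)).infinite_compl (hfin.subset hsub)
end

section
/- Let p be a prime, μ an additive Haar measure on ℤ_p with μ(ℤ_p) = 1, u a ℂ-linear functional on the space of all functions ℤ_p → ℂ, l ∈ ℕ, and φ : ℤ_p → ℂ a function such that φ(x) = φ(y) whenever ‖x − y‖ ≤ p^{−(l+1)}. Then the average formula holds: u(φ) = p^{l+1} · ∫_{ℤ_p} φ(x) · u(1_{B(x, l+1)}) dμ(x), where the integrand x ↦ φ(x)·u(1_{B(x,l+1)}) is constant on each ball of valuative radius l+1 and hence integrable. -/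
/-!
Reduction modulo `p ^ n`, with `n = l + 1`, partitions `ℤ_[p]` into `p ^ n` fibres, and the ball of
radius `p ^ (-n)` around `x` is the fibre through `x` (`norm_sub_le_iff_toZModPow`). The fibres are
translates of one another, so each has Haar measure `p ^ (-n)` (`measureReal_fibre`). A function that
is constant on the fibres is a finite linear combination of their indicators
(`comp_toZModPow_eq_sum`). Applied to `φ`, this and linearity give
`u φ = ∑ c, φ c * u (1_{fibre c})`; applied to the integrand, it gives integrability and evaluates the
integral as `p ^ (-n)` times the same sum (`integrable_and_integral_comp_toZModPow`).
-/

open MeasureTheory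

section Fibres

variable {p : ℕ} [Fact p.Prime]

lemma norm_sub_le_iff_toZModPow (n : ℕ) (x y : ℤ_[p]) :
    ‖x - y‖ ≤ (p : ℝ) ^ (-(n : ℤ)) ↔ PadicInt.toZModPow n x = PadicInt.toZModPow n y := by
  rw [PadicInt.norm_le_pow_iff_mem_span_pow, ← PadicInt.ker_toZModPow, RingHom.mem_ker, map_sub,
    sub_eq_zero]

lemma toZModPow_natCast_val (n : ℕ) (c : ZMod (p ^ n)) :
    PadicInt.toZModPow n ((c.val : ℕ) : ℤ_[p]) = c := by
  have : NeZero (p ^ n) := ⟨pow_ne_zero _ (Fact.out : p.Prime).ne_zero⟩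
  rw [map_natCast, ZMod.natCast_zmod_val]

lemma fibre_eq_closedBall (n : ℕ) (x : ℤ_[p]) :
    PadicInt.toZModPow n ⁻¹' {PadicInt.toZModPow n x} =
      Metric.closedBall x ((p : ℝ) ^ (-(n : ℤ))) := by
  ext z
  simp [← norm_sub_le_iff_toZModPow, dist_eq_norm]

lemma comp_toZModPow_eq_sum (n : ℕ) [Fintype (ZMod (p ^ n))] (g : ZMod (p ^ n) → ℂ) :
    (fun x : ℤ_[p] => g (PadicInt.toZModPow n x)) =
      ∑ c, g c • Set.indicator (PadicInt.toZModPow n ⁻¹' {c}) (fun _ : ℤ_[p] => (1 : ℂ)) := by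
  classical
  ext x
  simp [Set.indicator_apply]

section Measure

variable [MeasurableSpace ℤ_[p]] [BorelSpace ℤ_[p]]

lemma measurableSet_fibre (n : ℕ) (c : ZMod (p ^ n)) :
    MeasurableSet ((PadicInt.toZModPow n : ℤ_[p] →+* _) ⁻¹' {c}) := by
  rw [← toZModPow_natCast_val n c, fibre_eq_closedBall]
  exact Metric.isClosed_closedBall.measurableSet

lemma measureReal_fibre (μ : Measure ℤ_[p]) [μ.IsAddHaarMeasure] (hμ : μ Set.univ = 1) (n : ℕ)
    (c : ZMod (p ^ n)) :
    (p : ℝ) ^ n * μ.real ((PadicInt.toZModPow n : ℤ_[p] →+* _) ⁻¹' {c}) = 1 := by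
  have : NeZero (p ^ n) := ⟨pow_ne_zero _ (Fact.out : p.Prime).ne_zero⟩
  have : IsProbabilityMeasure μ := ⟨hμ⟩
  have htranslate : ∀ d : ZMod (p ^ n),
      μ.real ((PadicInt.toZModPow n : ℤ_[p] →+* _) ⁻¹' {d}) =
        μ.real ((PadicInt.toZModPow n : ℤ_[p] →+* _) ⁻¹' {c}) := by
    intro d
    have := measure_preimage_add μ (((d - c).val : ℕ) : ℤ_[p])
      ((PadicInt.toZModPow n : ℤ_[p] →+* _) ⁻¹' {d})
    rw [measureReal_def, measureReal_def, ← this]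
    congr 2
    ext z
    simp only [Set.mem_preimage, Set.mem_singleton_iff, map_add, toZModPow_natCast_val]
    constructor <;> intro h
    · linear_combination h
    · linear_combination h
  have hsum := sum_measureReal_preimage_singleton (μ := μ) (Finset.univ : Finset (ZMod (p ^ n)))
    (f := (PadicInt.toZModPow n : ℤ_[p] →+* _)) (fun y _ => measurableSet_fibre n y)
  simpa [htranslate, ZMod.card] using hsum

lemma integrable_and_integral_comp_toZModPow (μ : Measure ℤ_[p]) [μ.IsAddHaarMeasure]
    (hμ : μ Set.univ = 1) (n : ℕ) [Fintype (ZMod (p ^ n))] (g : ZMod (p ^ n) → ℂ) :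
    Integrable (fun x : ℤ_[p] => g (PadicInt.toZModPow n x)) μ ∧
      (p : ℂ) ^ n * ∫ x : ℤ_[p], g (PadicInt.toZModPow n x) ∂μ = ∑ c, g c := by
  have : IsProbabilityMeasure μ := ⟨hμ⟩
  have hint : ∀ c ∈ (Finset.univ : Finset (ZMod (p ^ n))), Integrable
      (g c • Set.indicator (PadicInt.toZModPow n ⁻¹' {c}) (fun _ : ℤ_[p] => (1 : ℂ))) μ :=
    fun c _ => ((integrable_const (1 : ℂ)).indicator (measurableSet_fibre n c)).smul (g c)
  rw [comp_toZModPow_eq_sum]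
  refine ⟨integrable_finsetSum' _ hint, ?_⟩
  rw [integral_congr_ae (.of_forall fun x => Finset.sum_apply x _ _)]
  rw [integral_finsetSum _ hint, Finset.mul_sum]
  refine Finset.sum_congr rfl fun c _ => ?_
  have hc : (p : ℂ) ^ n * (μ.real ((PadicInt.toZModPow n : ℤ_[p] →+* _) ⁻¹' {c}) : ℂ) = 1 :=
    mod_cast measureReal_fibre μ hμ n c
  simp only [Pi.smul_apply]
  rw [integral_smul, integral_indicator_const _ (measurableSet_fibre n c)]
  simp only [Complex.real_smul, smul_eq_mul, mul_one]
  linear_combination g c * hc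

end Measure

end Fibres

theorem padic_average_formula
    (p : ℕ) [Fact p.Prime] [MeasurableSpace ℤ_[p]] [BorelSpace ℤ_[p]]
    (μ : Measure ℤ_[p]) [μ.IsAddHaarMeasure] (hμ : μ Set.univ = 1)
    (u : (ℤ_[p] → ℂ) →ₗ[ℂ] ℂ) (l : ℕ) (φ : ℤ_[p] → ℂ)
    (hφ : ∀ x y : ℤ_[p], ‖x - y‖ ≤ (p : ℝ) ^ (-(l + 1 : ℤ)) → φ x = φ y) :
    Integrable
      (fun x : ℤ_[p] => φ x *
        u (Set.indicator {z : ℤ_[p] | ‖z - x‖ ≤ (p : ℝ) ^ (-(l + 1 : ℤ))}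
            (fun _ => (1 : ℂ)))) μ ∧
    u φ = (p : ℂ) ^ (l + 1) *
      ∫ x : ℤ_[p],
        φ x * u (Set.indicator {z : ℤ_[p] | ‖z - x‖ ≤ (p : ℝ) ^ (-(l + 1 : ℤ))}
            (fun _ => (1 : ℂ))) ∂μ := by
  have : NeZero (p ^ (l + 1)) := ⟨pow_ne_zero _ (Fact.out : p.Prime).ne_zero⟩
  have hball : ∀ x y : ℤ_[p], ‖x - y‖ ≤ (p : ℝ) ^ (-(l + 1 : ℤ)) ↔
      PadicInt.toZModPow (l + 1) x = PadicInt.toZModPow (l + 1) y := fun x y => by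
    simpa using norm_sub_le_iff_toZModPow (l + 1) x y
  -- `φ` descends to a function `f` on `ZMod (p ^ (l + 1))`, evaluated at natural representatives.
  obtain ⟨f, hf⟩ : ∃ f : ZMod (p ^ (l + 1)) → ℂ,
      ∀ x, φ x = f (PadicInt.toZModPow (l + 1) x) :=
    ⟨fun c => φ ((c.val : ℕ) : ℤ_[p]), fun x =>
      hφ _ _ ((hball _ _).2 (toZModPow_natCast_val _ _).symm)⟩
  have hset : ∀ x : ℤ_[p], {z : ℤ_[p] | ‖z - x‖ ≤ (p : ℝ) ^ (-(l + 1 : ℤ))} =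
      PadicInt.toZModPow (l + 1) ⁻¹' {PadicInt.toZModPow (l + 1) x} := fun x => by
    ext z
    exact hball z x
  obtain ⟨h1, h2⟩ := integrable_and_integral_comp_toZModPow μ hμ (l + 1) fun c =>
    f c * u (Set.indicator (PadicInt.toZModPow (l + 1) ⁻¹' {c}) (fun _ => (1 : ℂ)))
  simp only [hset, hf]
  refine ⟨h1, ?_⟩
  rw [h2, show φ = fun x => f (PadicInt.toZModPow (l + 1) x) from funext hf,
    comp_toZModPow_eq_sum, map_sum]
  simp only [map_smul, smul_eq_mul]
end
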